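/- Let Σ = (∅, ∅) be the hybrid signature with no propositional variables and no nominals, and let R = (ℝ, ≤) and Q = (ℚ, ≤) be the Kripke structures whose accessibility relations are the usual linear orders on the reals and the rationals. Then there exists an ω-bisimulation (B_k)_{k∈ω} between R and Q (satisfying all of the conditions (prop), (nom), (wvar), (forth), (back), (atv), (atn), (bind) and (ext), the conditions mentioning PROP or NOM holding vacuously) with B_0 non-empty. -/

import Mathlib

set_option autoImplicit false

/-! ## Hybrid logic: Kripke structures, hybrid formulas, satisfaction -/

/-- A Kripke structure over a hybrid signature `Σ = (P, Nom)`: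
`P` the propositional variables, `Nom` the nominals. -/
structure Kripke (P : Type) (Nom : Type) : Type 1 where
  W : Type
  R : W → W → Prop
  V : P → W → Prop
  nom : Nom → W

/-- Hybrid formulas over `Σ = (P, Nom)`; the world variables are the natural numbers.
`bind x φ` is `↓x φ`, `atv x φ` is `@_x φ`, `atn s φ` is `@_s φ`, `exq x φ` is `∃x φ`. -/
inductive HForm (P : Type) (Nom : Type) : Type
  | bot  : HForm P Nom
  | prop (p : P) : HForm P Nom
  | nom  (s : Nom) : HForm P Nom
  | wvar (x : ℕ) : HForm P Nom
  | neg  (φ : HForm P Nom) : HForm P Nom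
  | or   (φ ψ : HForm P Nom) : HForm P Nom
  | dia  (φ : HForm P Nom) : HForm P Nom
  | bind (x : ℕ) (φ : HForm P Nom) : HForm P Nom
  | atv  (x : ℕ) (φ : HForm P Nom) : HForm P Nom
  | atn  (s : Nom) (φ : HForm P Nom) : HForm P Nom
  | exq  (x : ℕ) (φ : HForm P Nom) : HForm P Nom

namespace HForm

/-- Conjunction, as an abbreviation `φ ∧ ψ := ¬(¬φ ∨ ¬ψ)`. -/
def and {P Nom : Type} (φ ψ : HForm P Nom) : HForm P Nom := .neg (.or (.neg φ) (.neg ψ))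

/-- Free world variables of a hybrid formula. -/
def free {P Nom : Type} : HForm P Nom → Set ℕ
  | .bot => ∅
  | .prop _ => ∅
  | .nom _ => ∅
  | .wvar x => {x}
  | .neg φ => φ.free
  | .or φ ψ => φ.free ∪ ψ.free
  | .dia φ => φ.free
  | .bind x φ => φ.free \ {x}
  | .atv x φ => insert x φ.free
  | .atn _ φ => φ.free
  | .exq x φ => φ.free \ {x}

/-- The degree of a hybrid formula. -/
def deg {P Nom : Type} : HForm P Nom → ℕ
  | .bot => 0
  | .prop _ => 0
  | .nom _ => 0
  | .wvar _ => 0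
  | .neg φ => φ.deg
  | .or φ ψ => max φ.deg ψ.deg
  | .dia φ => φ.deg + 1
  | .bind _ φ => φ.deg + 1
  | .atv _ φ => φ.deg
  | .atn _ φ => φ.deg
  | .exq _ φ => φ.deg + 1

end HForm

/-- The hybrid language features beyond basic modal logic: `@`, `↓`, `∃`, nominals. -/
inductive Feature : Type
  | at_ | bind | exq | nom
deriving DecidableEq

/-- Membership of a hybrid formula in the `F`-fragment: it uses only operators from `F`,
and nominals only if `Feature.nom ∈ F`. -/
def HForm.inFragment {P Nom : Type} (F : Set Feature) : HForm P Nom → Prop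
  | .bot => True
  | .prop _ => True
  | .nom _ => Feature.nom ∈ F
  | .wvar _ => True
  | .neg φ => φ.inFragment F
  | .or φ ψ => φ.inFragment F ∧ ψ.inFragment F
  | .dia φ => φ.inFragment F
  | .bind _ φ => Feature.bind ∈ F ∧ φ.inFragment F
  | .atv _ φ => Feature.at_ ∈ F ∧ φ.inFragment F
  | .atn _ φ => Feature.at_ ∈ F ∧ Feature.nom ∈ F ∧ φ.inFragment F
  | .exq _ φ => Feature.exq ∈ F ∧ φ.inFragment F

/-- Hybrid satisfaction `M, ν, m ⊩ φ`. -/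
def HSat {P Nom : Type} (M : Kripke P Nom) : (ℕ → M.W) → M.W → HForm P Nom → Prop
  | _, _, .bot => False
  | _, m, .prop p => M.V p m
  | _, m, .nom s => m = M.nom s
  | ν, m, .wvar x => m = ν x
  | ν, m, .neg φ => ¬ HSat M ν m φ
  | ν, m, .or φ ψ => HSat M ν m φ ∨ HSat M ν m ψ
  | ν, m, .dia φ => ∃ m', M.R m m' ∧ HSat M ν m' φ
  | ν, m, .bind x φ => HSat M (Function.update ν x m) m φ
  | ν, m, .atv x φ => HSat M ν (ν x) φ
  | ν, m, .atn s φ => HSat M ν (M.nom s) φ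
  | ν, m, .exq x φ => ∃ m' : M.W, HSat M (Function.update ν x m') m φ

/-- Satisfaction of a hybrid sentence: `M, m ⊩ φ` (the assignment is irrelevant). -/
def HSatS {P Nom : Type} (M : Kripke P Nom) (m : M.W) (φ : HForm P Nom) : Prop :=
  ∀ ν : ℕ → M.W, HSat M ν m φ

/-- `F`-elementary equivalence of pointed Kripke structures. -/
def FElemEquiv {P Nom : Type} (F : Set Feature) (M : Kripke P Nom) (m : M.W)
    (N : Kripke P Nom) (n : N.W) : Prop :=
  ∀ ψ : HForm P Nom, ψ.inFragment F → ψ.free = ∅ → (HSatS M m ψ ↔ HSatS N n ψ)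

/-! ## First-order logic over the corresponding signature `Σ°` -/

/-- First-order variables: the world variables `Sum.inl n` together with the two
designated variables `x = Sum.inr false` and `y = Sum.inr true`. -/
abbrev FVar : Type := ℕ ⊕ Bool

/-- First-order terms over `Σ°` with variables from `V`: variables and nominal constants. -/
inductive FOTerm (Nom V : Type) : Type
  | var (v : V)
  | nom (s : Nom)

/-- First-order formulas over `Σ°` (one binary relation `R`, a unary predicate for each
propositional variable, a constant for each nominal), with variables from `V`. -/
inductive FOForm (P Nom V : Type) : Type
  | bot
  | pred (p : P) (t : FOTerm Nom V)
  | rel (t u : FOTerm Nom V)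
  | eq (t u : FOTerm Nom V)
  | neg (φ : FOForm P Nom V)
  | or (φ ψ : FOForm P Nom V)
  | ex (v : V) (φ : FOForm P Nom V)

/-- First-order conjunction, `φ ∧ ψ := ¬(¬φ ∨ ¬ψ)`. -/
def FOForm.and {P Nom V : Type} (φ ψ : FOForm P Nom V) : FOForm P Nom V :=
  .neg (.or (.neg φ) (.neg ψ))

/-- Value of a term under an assignment, in a Kripke structure viewed as a `Σ°`-structure. -/
def FOTerm.val {P Nom V : Type} (M : Kripke P Nom) (g : V → M.W) : FOTerm Nom V → M.W
  | .var v => g v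
  | .nom s => M.nom s

/-- First-order satisfaction in a Kripke structure viewed as a `Σ°`-structure. -/
def FOSat {P Nom V : Type} [DecidableEq V] (M : Kripke P Nom) (g : V → M.W) :
    FOForm P Nom V → Prop
  | .bot => False
  | .pred p t => M.V p (t.val M g)
  | .rel t u => M.R (t.val M g) (u.val M g)
  | .eq t u => t.val M g = u.val M g
  | .neg φ => ¬ FOSat M g φ
  | .or φ ψ => FOSat M g φ ∨ FOSat M g ψ
  | .ex v φ => ∃ w : M.W, FOSat M (Function.update g v w) φ

/-- Variables of a first-order term. -/
def FOTerm.fvars {Nom V : Type} : FOTerm Nom V → Set V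
  | .var v => {v}
  | .nom _ => ∅

/-- Free variables of a first-order formula. -/
def FOForm.free {P Nom V : Type} : FOForm P Nom V → Set V
  | .bot => ∅
  | .pred _ t => t.fvars
  | .rel t u => t.fvars ∪ u.fvars
  | .eq t u => t.fvars ∪ u.fvars
  | .neg φ => φ.free
  | .or φ ψ => φ.free ∪ ψ.free
  | .ex v φ => φ.free \ {v}

/-- The standard translation `stdTr b φ`; `b : Bool` chooses the current designated
variable (`false` for `x`, `true` for `y`). -/
def stdTr {P Nom : Type} : Bool → HForm P Nom → FOForm P Nom FVar
  | b, .bot => .bot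
  | b, .prop p => .pred p (.var (Sum.inr b))
  | b, .nom s => .eq (.nom s) (.var (Sum.inr b))
  | b, .wvar z => .eq (.var (Sum.inl z)) (.var (Sum.inr b))
  | b, .neg φ => .neg (stdTr b φ)
  | b, .or φ ψ => .or (stdTr b φ) (stdTr b ψ)
  | b, .dia φ => .ex (Sum.inr (!b))
      (FOForm.and (.rel (.var (Sum.inr b)) (.var (Sum.inr (!b)))) (stdTr (!b) φ))
  | b, .bind z φ => .ex (Sum.inl z)
      (FOForm.and (.eq (.var (Sum.inl z)) (.var (Sum.inr b))) (stdTr b φ))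
  | b, .atv z φ => .ex (Sum.inr (!b))
      (FOForm.and (.eq (.var (Sum.inr (!b))) (.var (Sum.inl z))) (stdTr (!b) φ))
  | b, .atn s φ => .ex (Sum.inr (!b))
      (FOForm.and (.eq (.var (Sum.inr (!b))) (.nom s)) (stdTr (!b) φ))
  | b, .exq z φ => .ex (Sum.inl z) (stdTr b φ)

/-- `M ⊨ φ[m]`: satisfaction of a first-order formula whose free variable is the
designated variable `x = Sum.inr false`, under the assignment sending `x` to `m`. -/
def FOSatAt {P Nom : Type} (M : Kripke P Nom) (m : M.W) (φ : FOForm P Nom FVar) : Prop :=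
  ∀ g : FVar → M.W, g (Sum.inr false) = m → FOSat M g φ

/-! ## Bisimulations -/

/-- Ordinary bisimulations between Kripke structures. -/
def IsBisim {P Nom : Type} (M N : Kripke P Nom) (B : M.W → N.W → Prop) : Prop :=
  ∀ m n, B m n →
    (∀ p, M.V p m ↔ N.V p n) ∧
    (∀ m', M.R m m' → ∃ n', N.R n n' ∧ B m' n') ∧
    (∀ n', N.R n n' → ∃ m', M.R m m' ∧ B m' n')

/-- Quasi-injectivity of a bisimulation. -/
def QuasiInjective {P Nom : Type} (M N : Kripke P Nom) (B : M.W → N.W → Prop) : Prop :=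
  (∀ m n n', B m n → B m n' → n ≠ n' →
     ¬ Relation.ReflTransGen N.R n n' ∧ ¬ Relation.ReflTransGen N.R n' n) ∧
  (∀ m m' n, B m n → B m' n → m ≠ m' →
     ¬ Relation.ReflTransGen M.R m m' ∧ ¬ Relation.ReflTransGen M.R m' m)

/-- The type of relations `B_k ⊆ (M^k × M) × (N^k × N)`. -/
abbrev KRel {P Nom : Type} (M N : Kripke P Nom) (k : ℕ) : Type :=
  (Fin k → M.W) → M.W → (Fin k → N.W) → N.W → Prop

section BisimConds

variable {P Nom : Type} (M N : Kripke P Nom) {k : ℕ}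

/-- Condition (prop). -/
def PropCond (B : KRel M N k) : Prop :=
  ∀ mb m nb n, B mb m nb n → ∀ p, M.V p m ↔ N.V p n

/-- Condition (wvar). -/
def WvarCond (B : KRel M N k) : Prop :=
  ∀ mb m nb n, B mb m nb n → ∀ j : Fin k, mb j = m ↔ nb j = n

/-- Condition (forth). -/
def ForthCond (B : KRel M N k) : Prop :=
  ∀ mb m nb n, B mb m nb n → ∀ m', M.R m m' → ∃ n', N.R n n' ∧ B mb m' nb n'

/-- Condition (back). -/
def BackCond (B : KRel M N k) : Prop :=
  ∀ mb m nb n, B mb m nb n → ∀ n', N.R n n' → ∃ m', M.R m m' ∧ B mb m' nb n'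

/-- Condition (nom). -/
def NomCond (B : KRel M N k) : Prop :=
  ∀ mb m nb n, B mb m nb n → ∀ s : Nom, m = M.nom s ↔ n = N.nom s

/-- Condition (atv). -/
def AtvCond (B : KRel M N k) : Prop :=
  ∀ mb m nb n, B mb m nb n → ∀ j : Fin k, B mb (mb j) nb (nb j)

/-- Condition (atn). -/
def AtnCond (B : KRel M N k) : Prop :=
  ∀ mb m nb n, B mb m nb n → ∀ s : Nom, B mb (M.nom s) nb (N.nom s)

/-- Condition (bind). -/
def BindCond (B : KRel M N k) : Prop :=
  ∀ mb m nb n, B mb m nb n → ∀ j : Fin k,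
    B (Function.update mb j m) m (Function.update nb j n) n

/-- Condition (ex). -/
def ExCond (B : KRel M N k) : Prop :=
  ∀ mb m nb n, B mb m nb n → ∀ j : Fin k,
    (∀ u : M.W, ∃ u' : N.W, B (Function.update mb j u) m (Function.update nb j u') n) ∧
    (∀ u' : N.W, ∃ u : M.W, B (Function.update mb j u) m (Function.update nb j u') n)

/-- A `k`-bisimulation: conditions (prop), (wvar), (forth), (back). -/
def IsKBisim (B : KRel M N k) : Prop :=
  PropCond M N B ∧ WvarCond M N B ∧ ForthCond M N B ∧ BackCond M N B

/-- The conditions `cond(F)` for a feature set `F`, for a single relation `B_k`. -/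
def SatisfiesConds (F : Set Feature) (B : KRel M N k) : Prop :=
  (Feature.nom ∈ F → NomCond M N B) ∧
  (Feature.bind ∈ F → BindCond M N B) ∧
  (Feature.at_ ∈ F → AtvCond M N B) ∧
  (Feature.exq ∈ F → ExCond M N B) ∧
  (Feature.at_ ∈ F → Feature.nom ∈ F → AtnCond M N B)

end BisimConds

/-- An `F`-ω-bisimulation: a non-empty family `(B_k)` of `k`-bisimulations satisfying
(ext) and all the conditions in `cond(F)`. -/
def IsFOmegaBisim {P Nom : Type} (F : Set Feature) (M N : Kripke P Nom)
    (B : (k : ℕ) → KRel M N k) : Prop :=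
  (∀ k, IsKBisim M N (B k)) ∧
  (∃ k mb m nb n, B k mb m nb n) ∧
  (∀ k (mb : Fin k → M.W) m nb n, B k mb m nb n →
     B (k+1) (Fin.snoc mb m) m (Fin.snoc nb n) n) ∧
  (∀ k, SatisfiesConds M N F (B (k : ℕ)))

/-! ## `(k,ℓ)`- and `(ω,ℓ)`-bisimulations -/

section KL

variable {P Nom : Type} (M N : Kripke P Nom)

/-- A basic `(k,ℓ)`-bisimulation from `M` to `N` (the relations `Z i` for `i ≤ ℓ`). -/
def IsBasicKLBisim (k ℓ : ℕ) (Z : ℕ → KRel M N k) : Prop :=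
  (∀ i ≤ ℓ, PropCond M N (Z i) ∧ WvarCond M N (Z i)) ∧
  (∀ i, 0 < i → i ≤ ℓ → ∀ mb m nb n, Z (i-1) mb m nb n →
    (∀ u, M.R m u → ∃ u', N.R n u' ∧ Z i mb u nb u') ∧
    (∀ u', N.R n u' → ∃ u, M.R m u ∧ Z i mb u nb u'))

/-- The conditions `cond(F)` for a `(k,ℓ)`-bisimulation: (nom), (atv), (atn) are
required within each `Z i` (`i ≤ ℓ`), whereas (bind) and (ex) pass from `Z (i-1)`
to `Z i` for `0 < i ≤ ℓ`. -/
def KLSatisfiesConds (F : Set Feature) (k ℓ : ℕ) (Z : ℕ → KRel M N k) : Prop :=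
  (Feature.nom ∈ F → ∀ i ≤ ℓ, NomCond M N (Z i)) ∧
  (Feature.at_ ∈ F → ∀ i ≤ ℓ, AtvCond M N (Z i)) ∧
  (Feature.at_ ∈ F → Feature.nom ∈ F → ∀ i ≤ ℓ, AtnCond M N (Z i)) ∧
  (Feature.bind ∈ F → ∀ i, 0 < i → i ≤ ℓ → ∀ mb m nb n, Z (i-1) mb m nb n →
     ∀ j : Fin k, Z i (Function.update mb j m) m (Function.update nb j n) n) ∧
  (Feature.exq ∈ F → ∀ i, 0 < i → i ≤ ℓ → ∀ mb m nb n, Z (i-1) mb m nb n →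
     ∀ j : Fin k,
       (∀ u : M.W, ∃ u' : N.W, Z i (Function.update mb j u) m (Function.update nb j u') n) ∧
       (∀ u' : N.W, ∃ u : M.W, Z i (Function.update mb j u) m (Function.update nb j u') n))

/-- An `F`-`(k,ℓ)`-bisimulation. -/
def IsFKLBisim (F : Set Feature) (k ℓ : ℕ) (Z : ℕ → KRel M N k) : Prop :=
  IsBasicKLBisim M N k ℓ Z ∧ KLSatisfiesConds M N F k ℓ Z

/-- An `F`-`(ω,ℓ)`-bisimulation: a system `(Z^k_i)_{i ≤ ℓ, k ∈ ω}` of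
`F`-`(k,ℓ)`-bisimulations satisfying the extensibility condition (ext). -/
def IsFOmegaLBisim (F : Set Feature) (ℓ : ℕ)
    (Z : (k : ℕ) → ℕ → KRel M N k) : Prop :=
  (∀ k, IsFKLBisim M N F k ℓ (Z k)) ∧
  (∀ k i, 0 < i → i ≤ ℓ → ∀ (mb : Fin k → M.W) m nb n, Z k (i-1) mb m nb n →
     Z (k+1) i (Fin.snoc mb m) m (Fin.snoc nb n) n)

end KL
/-- The reals with their usual order, as a Kripke structure over the empty signature. -/
def realK : Kripke Empty Empty where
  W := ℝ
  R := fun a b => a ≤ b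
  V := fun p _ => p.elim
  nom := fun s => s.elim

/-- The rationals with their usual order, as a Kripke structure over the empty signature. -/
def ratK : Kripke Empty Empty where
  W := ℚ
  R := fun a b => a ≤ b
  V := fun p _ => p.elim
  nom := fun s => s.elim

/-!
Relate `(a, m)` to `(b, n)` when the extended tuples `a₁, …, a_k, m` and `b₁, …, b_k, n` have the
same order type. Conditions (atv), (bind) and (ext) only repeat or drop entries of the extended
tuples, which preserves equality of order types. Conditions (forth) and (back) are the extension
step of Cantor's back-and-forth argument: between finite tuples of dense linear orders without
endpoints, a new entry on one side can always be matched on the other.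
-/

/-- Two families in linear orders have the same order type when corresponding pairs of entries
compare in the same way. -/
def SameOrderType {ι α β : Type*} [LinearOrder α] [LinearOrder β] (a : ι → α) (b : ι → β) : Prop :=
  ∀ i j, cmp (a i) (a j) = cmp (b i) (b j)

namespace SameOrderType

variable {ι κ α β : Type*} [LinearOrder α] [LinearOrder β] {a : ι → α} {b : ι → β}

theorem symm (h : SameOrderType a b) : SameOrderType b a :=
  fun i j => (h i j).symm

theorem comp (h : SameOrderType a b) (σ : κ → ι) : SameOrderType (a ∘ σ) (b ∘ σ) :=
  fun i j => h (σ i) (σ j)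

theorem exists_cmp_eq [Finite ι] [DenselyOrdered β] [NoMinOrder β] [NoMaxOrder β] [Nonempty β]
    (h : SameOrderType a b) (x : α) : ∃ y, ∀ i, cmp (a i) x = cmp (b i) y := by
  have := Fintype.ofFinite ι
  let f : Order.PartialIso α β :=
    ⟨Finset.univ.image fun i => (a i, b i), by simpa [SameOrderType] using h⟩
  obtain ⟨y, hy⟩ := f.exists_across x
  exact ⟨y, fun i => hy (a i, b i) (Finset.mem_image_of_mem _ (Finset.mem_univ i))⟩

theorem snoc {k : ℕ} {a : Fin k → α} {b : Fin k → β} {x : α} {y : β} (h : SameOrderType a b)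
    (hxy : ∀ i, cmp (a i) x = cmp (b i) y) :
    SameOrderType (Fin.snoc a x : Fin (k + 1) → α) (Fin.snoc b y : Fin (k + 1) → β) := by
  have hyx : ∀ i, cmp x (a i) = cmp y (b i) := fun i => by
    rw [← cmp_swap, hxy, cmp_swap]
  intro i j
  induction i using Fin.lastCases <;> induction j using Fin.lastCases <;>
    simp [h _ _, hxy, hyx]

end SameOrderType

/-- Two pointed tuples have the same order type when the tuples `a₁, …, a_k, m` and
`b₁, …, b_k, n` obtained by appending the points do. -/
def SamePointedOrderType {α β : Type*} [LinearOrder α] [LinearOrder β] {k : ℕ}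
    (a : Fin k → α) (m : α) (b : Fin k → β) (n : β) : Prop :=
  SameOrderType (Fin.snoc a m : Fin (k + 1) → α) (Fin.snoc b n : Fin (k + 1) → β)

namespace SamePointedOrderType

variable {α β : Type*} [LinearOrder α] [LinearOrder β] {k : ℕ}
  {a : Fin k → α} {m : α} {b : Fin k → β} {n : β}

theorem symm (h : SamePointedOrderType a m b n) : SamePointedOrderType b n a m :=
  SameOrderType.symm h

theorem eq_iff_eq (h : SamePointedOrderType a m b n) (j : Fin k) : a j = m ↔ b j = n := by
  have h_cmp : cmp (a j) m = cmp (b j) n := by simpa using h j.castSucc (Fin.last k)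
  exact eq_iff_eq_of_cmp_eq_cmp h_cmp

theorem reindex {l : ℕ} (h : SamePointedOrderType a m b n) (σ : Fin l → Fin (k + 1))
    (i : Fin (k + 1)) :
    SamePointedOrderType
      ((Fin.snoc a m : Fin (k + 1) → α) ∘ σ) ((Fin.snoc a m : Fin (k + 1) → α) i)
      ((Fin.snoc b n : Fin (k + 1) → β) ∘ σ) ((Fin.snoc b n : Fin (k + 1) → β) i) := by
  simpa only [SamePointedOrderType, Fin.comp_snoc] using
    h.comp (Fin.snoc σ i : Fin (l + 1) → Fin (k + 1))

theorem point_apply (h : SamePointedOrderType a m b n) (j : Fin k) :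
    SamePointedOrderType a (a j) b (b j) := by
  simpa using h.reindex Fin.castSucc j.castSucc

theorem update_point (h : SamePointedOrderType a m b n) (j : Fin k) :
    SamePointedOrderType (Function.update a j m) m (Function.update b j n) n := by
  simpa [Function.comp_update] using
    h.reindex (Function.update Fin.castSucc j (Fin.last k)) (Fin.last k)

theorem snoc_point (h : SamePointedOrderType a m b n) :
    SamePointedOrderType (Fin.snoc a m : Fin (k + 1) → α) m
      (Fin.snoc b n : Fin (k + 1) → β) n := by
  simpa using h.reindex id (Fin.last k)

theorem exists_right_of_le [DenselyOrdered β] [NoMinOrder β] [NoMaxOrder β]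
    (h : SamePointedOrderType a m b n) {m' : α} (hm : m ≤ m') :
    ∃ n', n ≤ n' ∧ SamePointedOrderType a m' b n' := by
  have : Nonempty β := ⟨n⟩
  obtain ⟨n', hn'⟩ := SameOrderType.exists_cmp_eq h m'
  have h_last : cmp m m' = cmp n n' := by simpa using hn' (Fin.last k)
  have h_init : ∀ i, cmp (a i) m' = cmp (b i) n' := fun i => by simpa using hn' i.castSucc
  have h_tuple : SameOrderType a b := by simpa using h.comp Fin.castSucc
  exact ⟨n', (le_iff_le_of_cmp_eq_cmp h_last).1 hm, h_tuple.snoc h_init⟩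

theorem exists_left_of_le [DenselyOrdered α] [NoMinOrder α] [NoMaxOrder α]
    (h : SamePointedOrderType a m b n) {n' : β} (hn : n ≤ n') :
    ∃ m', m ≤ m' ∧ SamePointedOrderType a m' b n' := by
  obtain ⟨m', hm, h'⟩ := h.symm.exists_right_of_le hn
  exact ⟨m', hm, h'.symm⟩

end SamePointedOrderType

/-- A type with a relation `≤`, as a Kripke structure over the empty signature. -/
def orderKripke (α : Type) [LE α] : Kripke Empty Empty where
  W := α
  R := fun a b => a ≤ b
  V := fun p _ => p.elim
  nom := fun s => s.elim

/-- `SamePointedOrderType` as a relation between linear orders viewed as Kripke structures: the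
component `B_k` of the ω-bisimulation. -/
def orderTypeRel (α β : Type) [LinearOrder α] [LinearOrder β] (k : ℕ) :
    KRel (orderKripke α) (orderKripke β) k :=
  SamePointedOrderType (α := α) (β := β)

theorem isKBisim_orderTypeRel (α β : Type) [LinearOrder α] [LinearOrder β]
    [DenselyOrdered α] [NoMinOrder α] [NoMaxOrder α]
    [DenselyOrdered β] [NoMinOrder β] [NoMaxOrder β] (k : ℕ) :
    IsKBisim (orderKripke α) (orderKripke β) (orderTypeRel α β k) :=
  ⟨fun _ _ _ _ _ p => p.elim,
    fun _ _ _ _ h => SamePointedOrderType.eq_iff_eq (α := α) (β := β) h,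
    fun _ _ _ _ h _ hm => SamePointedOrderType.exists_right_of_le (α := α) (β := β) h hm,
    fun _ _ _ _ h _ hn => SamePointedOrderType.exists_left_of_le (α := α) (β := β) h hn⟩

theorem omega_bisim_real_rat_general (α β : Type) [LinearOrder α] [LinearOrder β]
    [DenselyOrdered α] [NoMinOrder α] [NoMaxOrder α] [Nonempty α]
    [DenselyOrdered β] [NoMinOrder β] [NoMaxOrder β] [Nonempty β] :
    ∃ B : (k : ℕ) → KRel (orderKripke α) (orderKripke β) k,
      (∀ k, IsKBisim (orderKripke α) (orderKripke β) (B k)) ∧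
      (∀ k, NomCond (orderKripke α) (orderKripke β) (B k)) ∧
      (∀ k, AtvCond (orderKripke α) (orderKripke β) (B k)) ∧
      (∀ k, AtnCond (orderKripke α) (orderKripke β) (B k)) ∧
      (∀ k, BindCond (orderKripke α) (orderKripke β) (B k)) ∧
      (∀ k (mb : Fin k → (orderKripke α).W) m nb n, B k mb m nb n →
         B (k + 1) (Fin.snoc mb m) m (Fin.snoc nb n) n) ∧
      (∃ m n, B 0 Fin.elim0 m Fin.elim0 n) := by
  obtain ⟨m⟩ := ‹Nonempty α›
  obtain ⟨n⟩ := ‹Nonempty β›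
  have h_zero : SamePointedOrderType Fin.elim0 m Fin.elim0 n :=
    SameOrderType.snoc (fun i => i.elim0) fun i => i.elim0
  exact ⟨orderTypeRel α β, isKBisim_orderTypeRel α β,
    fun _ _ _ _ _ _ s => s.elim,
    fun _ _ _ _ _ h => SamePointedOrderType.point_apply h,
    fun _ _ _ _ _ _ s => s.elim,
    fun _ _ _ _ _ h => SamePointedOrderType.update_point h,
    fun _ _ _ _ _ h => SamePointedOrderType.snoc_point h,
    m, n, h_zero⟩

/-- Example 5 of the paper. There is an ω-bisimulation between
`(ℝ, ≤)` and `(ℚ, ≤)` satisfying (prop), (nom), (wvar), (forth), (back), (atv), (atn),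
(bind) and (ext), with `B₀` non-empty. -/
theorem omega_bisim_real_rat :
    ∃ B : (k : ℕ) → KRel realK ratK k,
      (∀ k, IsKBisim realK ratK (B k)) ∧
      (∀ k, NomCond realK ratK (B k)) ∧
      (∀ k, AtvCond realK ratK (B k)) ∧
      (∀ k, AtnCond realK ratK (B k)) ∧
      (∀ k, BindCond realK ratK (B k)) ∧
      (∀ k (mb : Fin k → realK.W) m nb n, B k mb m nb n →
         B (k+1) (Fin.snoc mb m) m (Fin.snoc nb n) n) ∧
      (∃ m n, B 0 Fin.elim0 m Fin.elim0 n) :=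
  omega_bisim_real_rat_general ℝ ℚ
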